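/- arXiv:1607.07890 — 3 statements merged into one kernel-verified Lean document; each statement's English description precedes it below -/
import Mathlib

section
/- Let Ω be a type, E : (Ω → ℝ) → ℝ an ℝ-linear map, and a, b : Ω → ℝ with a taking values only in {0, 1} (∀ ω, a ω = 0 ∨ a ω = 1). Suppose C : ℝ → (Ω → ℝ) → ℝ is a conditional estimation for a, i.e. (i) for every v : ℝ and g : Ω → ℝ, C v (fun ω => a ω * g ω) = v * C v g, and (ii) for every g : Ω → ℝ, E g = E (fun ω => C (a ω) g). Then E (fun ω => a ω * b ω) = E a * C 1 b. (With the identifications P(A|I) = E(a) and P(B|A,I) = C 1 b, this is the product rule P(A ∧ B|I) = P(A|I) · P(B|A,I).) -/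
/-- the product rule. If `C` is a conditional estimation for the
binary quantity `a` (conditioning on `a = v` treats `a` as the constant `v`,
and the tower property holds), then
`E(a·b) = E(a) · C 1 b`, i.e. `P(A ∧ B|I) = P(A|I) · P(B|A,I)`. -/
theorem estimation_product_rule {Ω : Type*}
    (E : (Ω → ℝ) → ℝ)
    (hadd : ∀ f g : Ω → ℝ, E (f + g) = E f + E g)
    (hsmul : ∀ (c : ℝ) (f : Ω → ℝ), E (c • f) = c * E f)
    (a b : Ω → ℝ) (ha : ∀ ω, a ω = 0 ∨ a ω = 1)
    (C : ℝ → (Ω → ℝ) → ℝ)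
    (hC_const : ∀ (v : ℝ) (g : Ω → ℝ),
      C v (fun ω => a ω * g ω) = v * C v g)
    (hC_tower : ∀ g : Ω → ℝ, E g = E (fun ω => C (a ω) g)) :
    E (fun ω => a ω * b ω) = E a * C 1 b := by
  -- Since `a` is binary, `C (a ω) (a * b) = a ω * C (a ω) b` is the constant multiple
  -- `C 1 b * a ω` of `a`: both sides vanish where `a ω = 0`.
  have key : (fun ω => C (a ω) (fun ω' => a ω' * b ω')) = C 1 b • a := by
    funext ω
    rw [hC_const, Pi.smul_apply, smul_eq_mul]
    rcases ha ω with h | h <;> simp [h]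
  rw [hC_tower, key, hsmul, mul_comm]
end

section
/- Let Ω be a nonempty finite type and let E : (Ω → ℝ) → ℝ be ℝ-linear and satisfy the range requirement. Define p : Ω → ℝ by p ω = E (ind (fun ω' => ω' = ω)). Then (1) 0 ≤ p ω for every ω, (2) ∑ ω, p ω = 1, and (3) for every f : Ω → ℝ, E f = ∑ ω, p ω * f ω. In other words, the estimation operation is exactly the expectation with respect to the probability weights p ω = E(δ(ω, ·)). -/
/-! Every `f` is the finite combination `∑ ω, f ω • δ(ω, ·)`, so linearity alone gives
`E f = ∑ ω, p ω * f ω`. The range requirement applied to the indicators `δ(ω, ·)` makes the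
weights nonnegative, and applied to the constant function `1` it makes them sum to `1`. -/

/-- The indicator function of a decidable predicate. -/
def ind {Ω : Type*} (A : Ω → Prop) [DecidablePred A] : Ω → ℝ :=
  fun ω => if A ω then 1 else 0

/-- a linear estimation satisfying the range requirement is the
expectation with respect to the probability weights
`p ω = E (δ(ω, ·))`. -/
theorem estimation_eq_expectation {Ω : Type*} [Fintype Ω] [Nonempty Ω]
    [DecidableEq Ω]
    (E : (Ω → ℝ) → ℝ)
    (hadd : ∀ f g : Ω → ℝ, E (f + g) = E f + E g)
    (hsmul : ∀ (c : ℝ) (f : Ω → ℝ), E (c • f) = c * E f)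
    (hrange : ∀ f : Ω → ℝ,
      Finset.univ.inf' Finset.univ_nonempty f ≤ E f ∧
      E f ≤ Finset.univ.sup' Finset.univ_nonempty f)
    (p : Ω → ℝ) (hp : ∀ ω, p ω = E (ind (fun ω' => ω' = ω))) :
    (∀ ω, 0 ≤ p ω) ∧ (∑ ω, p ω = 1) ∧
      (∀ f : Ω → ℝ, E f = ∑ ω, p ω * f ω) := by
  have hbasis : ∀ f : Ω → ℝ, f = ∑ ω, f ω • ind (fun ω' => ω' = ω) := by
    intro f
    ext x
    simp [ind, Finset.sum_apply]
  let L : (Ω → ℝ) →ₗ[ℝ] ℝ := { toFun := E, map_add' := hadd, map_smul' := hsmul }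
  have hexp : ∀ f : Ω → ℝ, E f = ∑ ω, p ω * f ω := by
    intro f
    calc E f = L (∑ ω, f ω • ind (fun ω' => ω' = ω)) := congrArg E (hbasis f)
      _ = ∑ ω, f ω * E (ind (fun ω' => ω' = ω)) := by
        rw [map_sum]
        exact Finset.sum_congr rfl fun ω _ => hsmul _ _
      _ = ∑ ω, p ω * f ω :=
        Finset.sum_congr rfl fun ω _ => by rw [hp ω, mul_comm]
  refine ⟨fun ω => ?_, ?_, hexp⟩
  · rw [hp ω]
    refine le_trans (Finset.le_inf' _ _ fun x _ => ?_) (hrange _).1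
    unfold ind
    split_ifs <;> norm_num
  · -- The constant function `1` has minimum and maximum `1`, so its estimate is `1`.
    have h1 := hrange (fun _ => 1)
    rw [Finset.inf'_const, Finset.sup'_const] at h1
    simpa using (hexp (fun _ => 1)).symm.trans (le_antisymm h1.2 h1.1)
end

section
/- Let Ω be a nonempty finite type and let E : (Ω → ℝ) → ℝ be ℝ-linear and satisfy the range requirement. Then for every g : Ω → ℝ, writing V for the (finite) set of values attained by g, one has E g = ∑_{v ∈ V} v * E (ind (fun ω => g ω = v)); moreover the weights P v = E (ind (fun ω => g ω = v)) satisfy 0 ≤ P v ≤ 1 for every v ∈ V and ∑_{v ∈ V} P v = 1. -/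
/-- expansion of the estimation of a quantity `g` over its set of
values `V = g(Ω)`, with weights `P v = E(ind (g = v))` that are in `[0,1]` and
sum to one. -/
theorem estimation_expansion_over_values {Ω : Type*} [Fintype Ω] [Nonempty Ω]
    (E : (Ω → ℝ) → ℝ)
    (hadd : ∀ f g : Ω → ℝ, E (f + g) = E f + E g)
    (hsmul : ∀ (c : ℝ) (f : Ω → ℝ), E (c • f) = c * E f)
    (hrange : ∀ f : Ω → ℝ,
      Finset.univ.inf' Finset.univ_nonempty f ≤ E f ∧
      E f ≤ Finset.univ.sup' Finset.univ_nonempty f)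
    (g : Ω → ℝ) :
    E g = ∑ v ∈ Finset.image g Finset.univ,
        v * E (ind (fun ω => g ω = v)) ∧
    (∀ v ∈ Finset.image g Finset.univ,
        0 ≤ E (ind (fun ω => g ω = v)) ∧ E (ind (fun ω => g ω = v)) ≤ 1) ∧
    ∑ v ∈ Finset.image g Finset.univ, E (ind (fun ω => g ω = v)) = 1 := by
  -- Additivity and homogeneity make `E` a linear map, so it commutes with finite sums.
  let L : (Ω → ℝ) →ₗ[ℝ] ℝ :=
    { toFun := E, map_add' := hadd, map_smul' := hsmul }
  have hsum : ∀ (s : Finset ℝ) (c : ℝ → ℝ) (F : ℝ → Ω → ℝ),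
      E (∑ v ∈ s, c v • F v) = ∑ v ∈ s, c v * E (F v) := fun s c F => by
    change L _ = ∑ v ∈ s, c v * L (F v)
    simp
  have hone : E (fun _ => 1) = 1 := by
    have h := hrange (fun _ => 1)
    simp only [Finset.inf'_const, Finset.sup'_const] at h
    exact le_antisymm h.2 h.1
  refine ⟨?_, fun v _ => ⟨?_, ?_⟩, ?_⟩
  · rw [← hsum]
    congr 1
    ext ω
    simp [ind]
  · refine le_trans (Finset.le_inf' _ _ fun ω _ => ?_) (hrange _).1
    unfold ind
    split_ifs <;> norm_num
  · refine le_trans (hrange _).2 (Finset.sup'_le _ _ fun ω _ => ?_)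
    unfold ind
    split_ifs <;> norm_num
  · have h := hsum (Finset.image g Finset.univ) (fun _ => 1)
      (fun v => ind (fun ω => g ω = v))
    simp only [one_mul] at h
    refine h.symm.trans (Eq.trans ?_ hone)
    congr 1
    ext ω
    simp [ind]
end
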